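/- Let K be a field of characteristic zero and d a simple Shamsuddin derivation of the polynomial ring K[X,Y₁,...,Yₙ], n ≥ 1. Then the isotropy group of d is trivial: the only K-algebra automorphism ρ of K[X,Y₁,...,Yₙ] with ρdρ⁻¹ = d is the identity. -/

import Mathlib

open MvPolynomial

/-- `z' - l z = b` is solvable in polynomials for constant `l`. -/
theorem aux_solve {K : Type*} [Field K] [CharZero K] (l : K) (b : Polynomial K) :
    ∃ z : Polynomial K, Polynomial.derivative z = Polynomial.C l * z + b := by
  induction b using Polynomial.induction_on' with
  | add p q hp hq =>
    obtain ⟨z, hz⟩ := hp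
    obtain ⟨w, hw⟩ := hq
    exact ⟨z + w, by rw [Polynomial.derivative_add, hz, hw]; ring⟩
  | monomial m r =>
    by_cases hl : l = 0
    · refine ⟨Polynomial.monomial (m + 1) (r / ((m : K) + 1)), ?_⟩
      have : (m : K) + 1 ≠ 0 := Nat.cast_add_one_ne_zero m
      rw [Polynomial.derivative_monomial, hl]
      simp [this]
    · induction m generalizing r with
      | zero =>
        refine ⟨Polynomial.C (-(r / l)), ?_⟩
        rw [Polynomial.derivative_C, ← Polynomial.C_mul, Polynomial.monomial_zero_left,
          ← Polynomial.C_add]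
        have : l * -(r / l) + r = 0 := by field_simp; ring
        rw [this, Polynomial.C_0]
      | succ m ih =>
        obtain ⟨z, hz⟩ := ih (r / l * ((m : K) + 1))
        refine ⟨z + Polynomial.monomial (m + 1) (-(r / l)), ?_⟩
        rw [Polynomial.derivative_add, hz, Polynomial.derivative_monomial,
          mul_add (Polynomial.C l),
          Polynomial.C_mul_monomial]
        have h1 : l * -(r / l) = -r := by field_simp
        rw [h1]
        simp only [map_neg, neg_mul, Nat.add_sub_cancel]
        push_cast
        ring

theorem aux_periodic {K : Type*} [Field K] [CharZero K] (p : Polynomial K) (e : K) (he : e ≠ 0)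
    (h : ∀ x, p.eval (x + e) = p.eval x) : p = Polynomial.C (p.eval 0) := by
  have h2 : ∀ m : ℕ, p.eval ((m : K) * e) = p.eval 0 := by
    intro m
    induction m with
    | zero => simp
    | succ m ih =>
      rw [← ih, ← h ((m : K) * e)]
      push_cast
      ring_nf
  apply Polynomial.eq_of_infinite_eval_eq
  apply Set.Infinite.mono (s := Set.range fun m : ℕ => (m : K) * e)
  · rintro _ ⟨m, rfl⟩
    simp [h2 m]
  · apply Set.infinite_range_of_injective
    intro m k hmk
    simpa [he] using hmk

theorem aux_fin {K : Type*} [Field K] [CharZero K] {n : ℕ} (i : Fin n)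
    (a : Fin n → Polynomial K) (c : K) (hc : c ≠ 0)
    (h : ∀ i, ∃ j, ∀ x, (a i).eval (x + c) = (a j).eval x) :
    ∃ j l, a j = Polynomial.C l := by
  choose g hg using h
  have h1 : ∀ (k : ℕ) (j : Fin n) (x : K),
      (a (g^[k] j)).eval x = (a j).eval (x + k * c) := by
    intro k
    induction k with
    | zero => simp
    | succ k ih =>
      intro j x
      rw [Function.iterate_succ_apply, ih, ← hg]
      push_cast
      ring_nf
  obtain ⟨k, l, hkl, hne⟩ : ∃ k l : ℕ, g^[k] i = g^[l] i ∧ k ≠ l := by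
    have := not_injective_infinite_finite (fun k : ℕ => g^[k] i)
    simpa [Function.Injective] using this
  refine ⟨i, _, aux_periodic (a i) (((k : K) - l) * c) ?_ ?_⟩
  · refine mul_ne_zero (sub_ne_zero.2 ?_) hc
    exact_mod_cast hne
  · intro x
    have h2 := h1 k i (x - l * c)
    rw [hkl, h1 l i] at h2
    rw [show x + ((k : K) - l) * c = x - l * c + k * c by ring, ← h2]
    ring_nf

section
variable {K : Type*} [Field K] [CharZero K] {n : ℕ}
    (d : Derivation K (MvPolynomial (Fin (n + 1)) K) (MvPolynomial (Fin (n + 1)) K))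

theorem aux_darboux
    (hsimple : ∀ I : Ideal (MvPolynomial (Fin (n + 1)) K),
      (∀ x ∈ I, d x ∈ I) → I = ⊥ ∨ I = ⊤)
    (f g : MvPolynomial (Fin (n + 1)) K) (h : d f = g * f) :
    ∃ k : K, f = C k := by
  have hst : ∀ x ∈ Ideal.span {f}, d x ∈ Ideal.span {f} := by
    intro x hx
    rw [Ideal.mem_span_singleton'] at hx ⊢
    obtain ⟨q, rfl⟩ := hx
    refine ⟨d q + q * g, ?_⟩
    rw [Derivation.leibniz, h]
    simp only [smul_eq_mul]
    ring
  rcases hsimple (Ideal.span {f}) hst with h0 | h0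
  · rw [Ideal.span_singleton_eq_bot] at h0
    exact ⟨0, by simp [h0]⟩
  · rw [Ideal.span_singleton_eq_top, MvPolynomial.isUnit_iff_eq_C_of_isReduced] at h0
    obtain ⟨k, -, hk⟩ := h0
    exact ⟨k, hk⟩

theorem aux_aeval
    (D : Derivation K (MvPolynomial (Fin (n + 1)) K) (MvPolynomial (Fin (n + 1)) K))
    (p : Polynomial K) :
    D (Polynomial.aeval (X 0 : MvPolynomial (Fin (n + 1)) K) p) =
      Polynomial.aeval (X 0 : MvPolynomial (Fin (n + 1)) K) (Polynomial.derivative p) *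
        D (X 0) := by
  rw [Derivation.map_aeval, smul_eq_mul]

theorem aux_inj (p q : Polynomial K)
    (h : Polynomial.aeval (X 0 : MvPolynomial (Fin (n + 1)) K) p =
      Polynomial.aeval (X 0 : MvPolynomial (Fin (n + 1)) K) q) : p = q :=
  (transcendental_iff_injective.1 (MvPolynomial.transcendental_X K (0 : Fin (n + 1)))) h

theorem aux_pd (j : Fin n) (p : Polynomial K) :
    pderiv j.succ (Polynomial.aeval (X 0 : MvPolynomial (Fin (n + 1)) K) p) = 0 := by
  rw [aux_aeval, pderiv_X_of_ne (Fin.succ_ne_zero j).symm, mul_zero]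

theorem aux_nosol (a b : Fin n → Polynomial K)
    (hdX : d (X 0) = 1)
    (hdY : ∀ i : Fin n, d (X i.succ) =
      Polynomial.aeval (X 0 : MvPolynomial (Fin (n + 1)) K) (a i) * X i.succ +
        Polynomial.aeval (X 0 : MvPolynomial (Fin (n + 1)) K) (b i))
    (hsimple : ∀ I : Ideal (MvPolynomial (Fin (n + 1)) K),
      (∀ x ∈ I, d x ∈ I) → I = ⊥ ∨ I = ⊤) (i : Fin n) (l : K)
    (hl : a i = Polynomial.C l) : False := by
  obtain ⟨z, hz⟩ := aux_solve l (b i)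
  rw [← hl] at hz
  obtain ⟨k, hk⟩ := aux_darboux d hsimple
    (X i.succ - Polynomial.aeval (X 0 : MvPolynomial (Fin (n + 1)) K) z)
    (Polynomial.aeval (X 0 : MvPolynomial (Fin (n + 1)) K) (a i)) (by
      rw [map_sub, aux_aeval, hdX, hdY, hz, map_add, map_mul]
      ring)
  have := congrArg (pderiv i.succ) hk
  rw [map_sub, aux_pd, pderiv_X_self, pderiv_C] at this
  simp at this

theorem aux_comm (a b : Fin n → Polynomial K)
    (hdX : d (X 0) = 1)
    (hdY : ∀ i : Fin n, d (X i.succ) =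
      Polynomial.aeval (X 0 : MvPolynomial (Fin (n + 1)) K) (a i) * X i.succ +
        Polynomial.aeval (X 0 : MvPolynomial (Fin (n + 1)) K) (b i))
    (j : Fin n) (f : MvPolynomial (Fin (n + 1)) K) :
    pderiv j.succ (d f) = d (pderiv j.succ f) +
      Polynomial.aeval (X 0 : MvPolynomial (Fin (n + 1)) K) (a j) * pderiv j.succ f := by
  have key : ⁅(pderiv j.succ : Derivation K (MvPolynomial (Fin (n + 1)) K)
      (MvPolynomial (Fin (n + 1)) K)), d⁆ =
      Polynomial.aeval (X 0 : MvPolynomial (Fin (n + 1)) K) (a j) • pderiv j.succ := by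
    apply MvPolynomial.derivation_ext
    intro i
    rw [Derivation.commutator_apply, Derivation.smul_apply, smul_eq_mul]
    refine Fin.cases ?_ (fun i => ?_) i
    · rw [hdX, pderiv_X_of_ne (Fin.succ_ne_zero j).symm]
      simp
    · rw [hdY, map_add, aux_pd, Derivation.leibniz, aux_pd]
      by_cases hij : i = j
      · subst hij
        simp
      · rw [pderiv_X_of_ne (by simpa using hij)]
        simp
  have := congrArg (fun D => D f) key
  simp only [Derivation.commutator_apply, Derivation.smul_apply, smul_eq_mul] at this
  rw [← this]
  ring

theorem aux_nonconst (ρ : MvPolynomial (Fin (n + 1)) K ≃ₐ[K] MvPolynomial (Fin (n + 1)) K)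
    (c : K) (hc : ρ (X 0) = X 0 + C c) (i : Fin n)
    (h : ∀ j : Fin n, pderiv j.succ (ρ (X i.succ)) = 0) : False := by
  let E : Derivation K (MvPolynomial (Fin (n + 1)) K) (MvPolynomial (Fin (n + 1)) K) :=
    Derivation.mk' (ρ.toLinearMap ∘ₗ (pderiv i.succ).toLinearMap ∘ₗ ρ.symm.toLinearMap) (by
      intro p q
      simp [Derivation.leibniz])
  have hE : ∀ f, E f = ρ (pderiv i.succ (ρ.symm f)) := fun f => rfl
  have h0 : E (X 0) = 0 := by
    have h1 : E (ρ (X 0)) = 0 := by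
      rw [hE, AlgEquiv.symm_apply_apply, pderiv_X_of_ne (Fin.succ_ne_zero i).symm, map_zero]
    rw [hc, map_add] at h1
    have h2 : E (C c) = 0 := E.map_algebraMap c
    simpa [h2] using h1
  have hs : E = ∑ j : Fin n, E (X j.succ) • pderiv j.succ := by
    apply MvPolynomial.derivation_ext
    intro m
    have hco : ∀ f, (∑ j : Fin n, E (X j.succ) • pderiv j.succ :
        Derivation K (MvPolynomial (Fin (n + 1)) K) (MvPolynomial (Fin (n + 1)) K)) f =
        ∑ j : Fin n, E (X j.succ) * pderiv j.succ f := by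
      intro f
      rw [← Derivation.coeFnAddMonoidHom_apply, map_sum, Finset.sum_apply]
      simp
    rw [hco]
    refine Fin.cases ?_ (fun m => ?_) m
    · rw [h0, Finset.sum_eq_zero]
      intro j _
      rw [pderiv_X_of_ne (Fin.succ_ne_zero j).symm, mul_zero]
    · rw [Finset.sum_eq_single m]
      · simp
      · intro j _ hj
        rw [pderiv_X_of_ne (by simpa using hj.symm), mul_zero]
      · simp
  have h3 : E (ρ (X i.succ)) = 1 := by
    rw [hE, AlgEquiv.symm_apply_apply, pderiv_X_self, map_one]
  rw [hs, ← Derivation.coeFnAddMonoidHom_apply, map_sum, Finset.sum_apply] at h3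
  simp [h] at h3

end

/-- The isotropy group of a simple Shamsuddin derivation of `K[X,Y₁,…,Yₙ]`, `n ≥ 1`,
is trivial. -/
theorem stmt4 (K : Type*) [Field K] [CharZero K] (n : ℕ) (hn : 1 ≤ n)
    (d : Derivation K (MvPolynomial (Fin (n + 1)) K) (MvPolynomial (Fin (n + 1)) K))
    (a b : Fin n → Polynomial K)
    (hdX : d (X 0) = 1)
    (hdY : ∀ i : Fin n, d (X i.succ) =
      Polynomial.aeval (X 0 : MvPolynomial (Fin (n + 1)) K) (a i) * X i.succ +
        Polynomial.aeval (X 0 : MvPolynomial (Fin (n + 1)) K) (b i))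
    (hsimple : ∀ I : Ideal (MvPolynomial (Fin (n + 1)) K),
      (∀ x ∈ I, d x ∈ I) → I = ⊥ ∨ I = ⊤)
    (ρ : MvPolynomial (Fin (n + 1)) K ≃ₐ[K] MvPolynomial (Fin (n + 1)) K)
    (hρ : ∀ r, ρ (d r) = d (ρ r)) :
    ρ = AlgEquiv.refl := by
  have hno := aux_nosol d a b hdX hdY hsimple
  obtain ⟨c, hc⟩ : ∃ c : K, ρ (X 0) = X 0 + C c := by
    obtain ⟨c, hc⟩ := aux_darboux d hsimple (ρ (X 0) - X 0) 0 (by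
      rw [map_sub, ← hρ, hdX, map_one]; simp)
    exact ⟨c, by rw [← hc]; ring⟩
  have hae : ∀ p : Polynomial K,
      ρ (Polynomial.aeval (X 0 : MvPolynomial (Fin (n + 1)) K) p) =
      Polynomial.aeval (X 0 : MvPolynomial (Fin (n + 1)) K)
        (p.comp (Polynomial.X + Polynomial.C c)) := by
    intro p
    rw [← Polynomial.aeval_algHom_apply, hc, Polynomial.aeval_comp]
    simp [MvPolynomial.algebraMap_eq]
  by_cases hc0 : c = 0
  · subst hc0
    have hX : ρ (X 0) = X 0 := by simpa using hc
    have hY : ∀ i : Fin n, ρ (X i.succ) = X i.succ := by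
      intro i
      have hd : d (ρ (X i.succ) - X i.succ) =
          Polynomial.aeval (X 0 : MvPolynomial (Fin (n + 1)) K) (a i) *
            (ρ (X i.succ) - X i.succ) := by
        rw [map_sub, ← hρ, hdY, map_add, map_mul, hae, hae]
        simp only [Polynomial.C_0, add_zero, Polynomial.comp_X]
        ring
      obtain ⟨k, hk⟩ := aux_darboux d hsimple _ _ hd
      rw [hk] at hd
      have h2 : d (C k) = 0 := d.map_algebraMap k
      rw [h2] at hd
      rcases mul_eq_zero.1 hd.symm with h3 | h3
      · exact (hno i 0 (by
          rw [Polynomial.C_0]; exact aux_inj (n := n) _ _ (by rw [h3, map_zero]))).elim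
      · rw [h3] at hk
        exact sub_eq_zero.1 hk
    apply AlgEquiv.coe_toAlgHom_injective
    apply MvPolynomial.algHom_ext
    intro m
    refine Fin.cases ?_ (fun i => ?_) m
    · simpa using hX
    · simpa using hY i
  · exfalso
    obtain ⟨j, l, hj⟩ := aux_fin (⟨0, hn⟩ : Fin n) a c hc0 (by
      intro i
      by_contra! hcon
      refine aux_nonconst ρ c hc i (fun j => ?_)
      have hd : d (pderiv j.succ (ρ (X i.succ))) =
          Polynomial.aeval (X 0 : MvPolynomial (Fin (n + 1)) K)
            ((a i).comp (Polynomial.X + Polynomial.C c) - a j) *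
            pderiv j.succ (ρ (X i.succ)) := by
        have h1 := aux_comm d a b hdX hdY j (ρ (X i.succ))
        rw [← hρ, hdY, map_add, map_mul, hae, hae, map_add, aux_pd, Derivation.leibniz,
          aux_pd] at h1
        simp only [smul_eq_mul, mul_zero, add_zero] at h1
        rw [map_sub, sub_mul, h1]
        ring
      obtain ⟨k, hk⟩ := aux_darboux d hsimple _ _ hd
      rw [hk] at hd ⊢
      have h2 : d (C k) = 0 := d.map_algebraMap k
      rw [h2] at hd
      rcases mul_eq_zero.1 hd.symm with h3 | h3
      · exfalso
        have h4 := aux_inj (n := n) _ 0 (by rw [h3, map_zero])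
        obtain ⟨x, hx⟩ := hcon j
        apply hx
        rw [← sub_eq_zero.1 h4]
        simp
      · exact h3)
    exact hno j l hj
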